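/- Let U ⊆ ℝⁿ be open and let g : U → Matrix (Fin n) (Fin n) ℝ be a C¹ map such that g(x) is symmetric and invertible for every x ∈ U, with Christoffel symbols Γ^k_{ij}(x) := (1/2) Σ_l (g(x)⁻¹)_{kl} (∂_i g_{lj}(x) + ∂_j g_{il}(x) − ∂_l g_{ij}(x)). Let ε_1, …, ε_n ∈ {−1, 1} and set η := diag(ε_1, …, ε_n). Suppose E_1, …, E_n : U → ℝⁿ are C¹ vector fields forming a parallel orthonormal frame, i.e. E_i(x)ᵀ g(x) E_j(x) = ε_i δ_{ij} for all x ∈ U and all i, j, and ∂_α E_j^k(x) + Σ_γ Γ^k_{αγ}(x) E_j^γ(x) = 0 for all x ∈ U and all α, j, k. Then for every p ∈ U there exist an open neighborhood V ⊆ U of p, an open set W ⊆ ℝⁿ, and a C² map φ : V → ℝⁿ that is a bijection from V onto W with C² inverse, such that g(x) = Dφ(x)ᵀ · η · Dφ(x) for every x ∈ V, i.e. φ pulls back the constant semi-Euclidean metric η of signature (ε_1, …, ε_n) to g. -/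

import Mathlib

/-!
Write `A` for the matrix whose rows are the frame vectors `E_i`, and `η = diag(ε)`. Orthonormality
says `A g Aᵀ = η`, so `B = η A g` is the matrix of the dual coframe: `B Aᵀ = 1 = Aᵀ B`, and
symmetry of `g` gives `g = Bᵀ η B`. Differentiating `B Aᵀ = 1` and inserting the parallel equation
`∂_α Aᵀ = -Γ_α Aᵀ` yields `∂_α B_{iβ} = Σ_k B_{ik} Γ^k_{αβ}` (`coframe_fderiv`). The right-hand side
is symmetric in `α, β` because the Christoffel symbols are, so the rows of `B` are closed `C¹`
one-forms. By the Poincaré lemma on a ball they are the differentials of the components of a `C²`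
map `φ` whose Jacobian is `B`, and `B` is invertible, so the inverse function theorem makes `φ`
a local `C²` diffeomorphism.
-/

open scoped Matrix BigOperators

/-- The Christoffel symbols `Γ^k_{ij}` of a metric `g` on (an open subset of) `ℝⁿ`:
`Γ^k_{ij}(x) = (1/2) Σ_l (g(x)⁻¹)_{kl} (∂_i g_{lj}(x) + ∂_j g_{il}(x) − ∂_l g_{ij}(x))`. -/
noncomputable def christoffel {n : ℕ}
    (g : (Fin n → ℝ) → Matrix (Fin n) (Fin n) ℝ) (k i j : Fin n)
    (x : Fin n → ℝ) : ℝ :=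
  (1 / 2) * ∑ l : Fin n, (g x)⁻¹ k l *
    (fderiv ℝ (fun y => g y l j) x (Pi.single i 1)
      + fderiv ℝ (fun y => g y i l) x (Pi.single j 1)
      - fderiv ℝ (fun y => g y i j) x (Pi.single l 1))

/-- The Jacobian matrix of `φ : ℝⁿ → ℝⁿ` at `x`: entry `(i, j)` is `∂_j φ_i(x)`. -/
noncomputable def jacobian {n : ℕ} (φ : (Fin n → ℝ) → (Fin n → ℝ))
    (x : Fin n → ℝ) : Matrix (Fin n) (Fin n) ℝ :=
  Matrix.of fun i j => fderiv ℝ φ x (Pi.single j 1) i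

/-- The dual coframe `B_{ia} = ε_i Σ_b E_i^b g_{ba}` of an orthonormal frame `E`: its `i`-th row
holds the components of the one-form `ε_i g(E_i, ·)`. -/
def coframe {n : ℕ} (g : (Fin n → ℝ) → Matrix (Fin n) (Fin n) ℝ) (ε : Fin n → ℝ)
    (E : Fin n → (Fin n → ℝ) → (Fin n → ℝ)) (x : Fin n → ℝ) : Matrix (Fin n) (Fin n) ℝ :=
  Matrix.of fun i a => ε i * ∑ b, E i x b * g x b a

/-- The coframe as an `ℝⁿ`-valued one-form. -/
noncomputable def coframeForm {n : ℕ} (g : (Fin n → ℝ) → Matrix (Fin n) (Fin n) ℝ) (ε : Fin n → ℝ)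
    (E : Fin n → (Fin n → ℝ) → (Fin n → ℝ)) (x : Fin n → ℝ) : (Fin n → ℝ) →L[ℝ] (Fin n → ℝ) :=
  LinearMap.toContinuousLinearMap (Matrix.toLin' (coframe g ε E x))

lemma coframe_eq_mul {n : ℕ} (g : (Fin n → ℝ) → Matrix (Fin n) (Fin n) ℝ) (ε : Fin n → ℝ)
    (E : Fin n → (Fin n → ℝ) → (Fin n → ℝ)) (x : Fin n → ℝ) :
    coframe g ε E x = Matrix.diagonal ε * (Matrix.of (fun i b => E i x b) * g x) := by
  ext i a
  rw [Matrix.diagonal_mul, Matrix.mul_apply]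
  rfl

lemma diagonal_sign_sq {n : ℕ} {ε : Fin n → ℝ} (hε : ∀ i, ε i = 1 ∨ ε i = -1) :
    Matrix.diagonal ε * Matrix.diagonal ε = 1 := by
  rw [Matrix.diagonal_mul_diagonal, ← Matrix.diagonal_one]
  congr 1
  ext i
  rcases hε i with h | h <;> simp [h]

lemma coframe_mul_frame {n : ℕ} {g : (Fin n → ℝ) → Matrix (Fin n) (Fin n) ℝ} {ε : Fin n → ℝ}
    (hε : ∀ i, ε i = 1 ∨ ε i = -1) {E : Fin n → (Fin n → ℝ) → (Fin n → ℝ)} {x : Fin n → ℝ}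
    (horth : ∀ i j : Fin n, E i x ⬝ᵥ (g x *ᵥ E j x) = if i = j then ε i else 0) :
    coframe g ε E x * (Matrix.of fun i b => E i x b)ᵀ = 1 := by
  have h : (Matrix.of (fun i b => E i x b) * g x) * (Matrix.of fun i b => E i x b)ᵀ
      = Matrix.diagonal ε := by
    rw [Matrix.mul_assoc]
    ext i j
    rw [Matrix.diagonal_apply, ← horth i j]
    simp [Matrix.mul_apply, dotProduct, Matrix.mulVec]
  rw [coframe_eq_mul, Matrix.mul_assoc, h, diagonal_sign_sq hε]

lemma metric_eq_coframe {n : ℕ} {g : (Fin n → ℝ) → Matrix (Fin n) (Fin n) ℝ} {ε : Fin n → ℝ}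
    (hε : ∀ i, ε i = 1 ∨ ε i = -1) {E : Fin n → (Fin n → ℝ) → (Fin n → ℝ)} {x : Fin n → ℝ}
    (hsymm : (g x).IsSymm)
    (horth : ∀ i j : Fin n, E i x ⬝ᵥ (g x *ᵥ E j x) = if i = j then ε i else 0) :
    g x = (coframe g ε E x)ᵀ * Matrix.diagonal ε * coframe g ε E x := by
  have h := mul_eq_one_comm.mp (coframe_mul_frame hε horth)
  have ht : (coframe g ε E x)ᵀ
      = g x * (Matrix.of fun i b => E i x b)ᵀ * Matrix.diagonal ε := by
    rw [coframe_eq_mul, Matrix.transpose_mul, Matrix.transpose_mul, hsymm.eq,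
      Matrix.diagonal_transpose]
  rw [ht, Matrix.mul_assoc _ (Matrix.diagonal ε) (Matrix.diagonal ε), diagonal_sign_sq hε,
    Matrix.mul_one, Matrix.mul_assoc, h, Matrix.mul_one]

lemma christoffel_symm {n : ℕ} {U : Set (Fin n → ℝ)} (hU : IsOpen U)
    {g : (Fin n → ℝ) → Matrix (Fin n) (Fin n) ℝ} (hsymm : ∀ x ∈ U, (g x).IsSymm)
    {x : Fin n → ℝ} (hx : x ∈ U) (k i j : Fin n) :
    christoffel g k i j x = christoffel g k j i x := by
  have key (a b : Fin n) : fderiv ℝ (fun y => g y a b) x = fderiv ℝ (fun y => g y b a) x := by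
    apply Filter.EventuallyEq.fderiv_eq
    filter_upwards [hU.mem_nhds hx] with y hy
    exact (hsymm y hy).apply b a
  unfold christoffel
  congr 1
  refine Finset.sum_congr rfl fun l _ => ?_
  rw [key l j, key i l, key i j]
  ring

lemma contDiffOn_coframe {n : ℕ} {U : Set (Fin n → ℝ)}
    {g : (Fin n → ℝ) → Matrix (Fin n) (Fin n) ℝ}
    (hg : ∀ i j : Fin n, ContDiffOn ℝ 1 (fun y => g y i j) U) (ε : Fin n → ℝ)
    {E : Fin n → (Fin n → ℝ) → (Fin n → ℝ)} (hE : ∀ j, ContDiffOn ℝ 1 (E j) U) (i a : Fin n) :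
    ContDiffOn ℝ 1 (fun y => coframe g ε E y i a) U := by
  simp only [coframe, Matrix.of_apply]
  exact contDiffOn_const.mul (ContDiffOn.sum fun b _ => (contDiffOn_pi.1 (hE i) b).mul (hg b a))

lemma contDiffOn_coframeForm {n : ℕ} {U : Set (Fin n → ℝ)}
    {g : (Fin n → ℝ) → Matrix (Fin n) (Fin n) ℝ}
    (hg : ∀ i j : Fin n, ContDiffOn ℝ 1 (fun y => g y i j) U) (ε : Fin n → ℝ)
    {E : Fin n → (Fin n → ℝ) → (Fin n → ℝ)} (hE : ∀ j, ContDiffOn ℝ 1 (E j) U) :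
    ContDiffOn ℝ 1 (coframeForm g ε E) U := by
  refine contDiffOn_clm_apply.2 fun v => contDiffOn_pi.2 fun i => ?_
  simp only [coframeForm, LinearMap.coe_toContinuousLinearMap', Matrix.toLin'_apply,
    Matrix.mulVec, dotProduct]
  exact ContDiffOn.sum fun a _ => (contDiffOn_coframe hg ε hE i a).mul contDiffOn_const

/-- The dual coframe of a parallel frame is parallel: `∂_α B_{iβ} = Σ_k B_{ik} Γ^k_{αβ}`. -/
lemma coframe_fderiv {n : ℕ} {U : Set (Fin n → ℝ)} (hU : IsOpen U)
    {g : (Fin n → ℝ) → Matrix (Fin n) (Fin n) ℝ}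
    (hg : ∀ i j : Fin n, ContDiffOn ℝ 1 (fun y => g y i j) U)
    {ε : Fin n → ℝ} (hε : ∀ i, ε i = 1 ∨ ε i = -1)
    {E : Fin n → (Fin n → ℝ) → (Fin n → ℝ)} (hE : ∀ j, ContDiffOn ℝ 1 (E j) U)
    (horth : ∀ x ∈ U, ∀ i j : Fin n,
      E i x ⬝ᵥ (g x *ᵥ E j x) = if i = j then ε i else 0)
    (hpar : ∀ x ∈ U, ∀ α j k : Fin n,
      fderiv ℝ (fun y => E j y k) x (Pi.single α 1)
        + ∑ γ' : Fin n, christoffel g k α γ' x * E j x γ' = 0)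
    {x : Fin n → ℝ} (hx : x ∈ U) (α i β : Fin n) :
    fderiv ℝ (fun y => coframe g ε E y i β) x (Pi.single α 1)
      = ∑ k, coframe g ε E x i k * christoffel g k α β x := by
  let A : Matrix (Fin n) (Fin n) ℝ := Matrix.of fun i b => E i x b
  let B := coframe g ε E x
  let D : Matrix (Fin n) (Fin n) ℝ :=
    Matrix.of fun i a => fderiv ℝ (fun y => coframe g ε E y i a) x (Pi.single α 1)
  let M : Matrix (Fin n) (Fin n) ℝ := Matrix.of fun k c => christoffel g k α c x
  have hB (i a : Fin n) : DifferentiableAt ℝ (fun y => coframe g ε E y i a) x :=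
    ((contDiffOn_coframe hg ε hE i a).contDiffAt (hU.mem_nhds hx)).differentiableAt one_ne_zero
  have hEd (j a : Fin n) : DifferentiableAt ℝ (fun y => E j y a) x :=
    ((contDiffOn_pi.1 (hE j) a).contDiffAt (hU.mem_nhds hx)).differentiableAt one_ne_zero
  -- The product rule for the locally constant `B Aᵀ = 1`; `∂_α Aᵀ = -M Aᵀ` is the parallel equation.
  have h0 : D * Aᵀ = B * M * Aᵀ := by
    rw [Matrix.mul_assoc]
    ext i j
    have hconst : (fun y => ∑ a, coframe g ε E y i a * E j y a)
        =ᶠ[nhds x] fun _ => (1 : Matrix (Fin n) (Fin n) ℝ) i j := by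
      filter_upwards [hU.mem_nhds hx] with y hy
      rw [← coframe_mul_frame hε (horth y hy)]
      simp [Matrix.mul_apply]
    have hd := congrArg (fun L : (Fin n → ℝ) →L[ℝ] ℝ => L (Pi.single α 1)) hconst.fderiv_eq
    simp only [fderiv_const_apply] at hd
    rw [fderiv_fun_sum fun a _ => (hB i a).fun_mul (hEd j a)] at hd
    simp only [fderiv_fun_mul (hB i _) (hEd j _), sum_apply,
      add_apply, smul_apply, smul_eq_mul,
      zero_apply, Finset.sum_add_distrib] at hd
    have hp (k : Fin n) : fderiv ℝ (fun y => E j y k) x (Pi.single α 1)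
        = -∑ c, christoffel g k α c x * E j x c := eq_neg_of_add_eq_zero_left (hpar x hx α j k)
    simp only [hp, mul_neg, Finset.sum_neg_distrib] at hd
    simp only [A, B, D, M, Matrix.mul_apply, Matrix.of_apply, Matrix.transpose_apply]
    simp only [mul_comm (E j x _)] at hd
    linarith
  have hAB : Aᵀ * B = 1 := mul_eq_one_comm.mp (coframe_mul_frame hε (horth x hx))
  have h1 : D = B * M := by
    have := congrArg (· * B) h0
    simpa only [Matrix.mul_assoc, hAB, Matrix.mul_one] using this
  have h2 := congrFun (congrFun h1 i) β
  simpa [D, B, M, Matrix.mul_apply] using h2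

/-- The coframe of a parallel frame is a closed one-form. -/
lemma coframeForm_closed {n : ℕ} {U : Set (Fin n → ℝ)} (hU : IsOpen U)
    {g : (Fin n → ℝ) → Matrix (Fin n) (Fin n) ℝ}
    (hg : ∀ i j : Fin n, ContDiffOn ℝ 1 (fun y => g y i j) U)
    (hsymm : ∀ x ∈ U, (g x).IsSymm)
    {ε : Fin n → ℝ} (hε : ∀ i, ε i = 1 ∨ ε i = -1)
    {E : Fin n → (Fin n → ℝ) → (Fin n → ℝ)} (hE : ∀ j, ContDiffOn ℝ 1 (E j) U)
    (horth : ∀ x ∈ U, ∀ i j : Fin n,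
      E i x ⬝ᵥ (g x *ᵥ E j x) = if i = j then ε i else 0)
    (hpar : ∀ x ∈ U, ∀ α j k : Fin n,
      fderiv ℝ (fun y => E j y k) x (Pi.single α 1)
        + ∑ γ' : Fin n, christoffel g k α γ' x * E j x γ' = 0)
    {x : Fin n → ℝ} (hx : x ∈ U) (u v : Fin n → ℝ) :
    fderiv ℝ (coframeForm g ε E) x u v = fderiv ℝ (coframeForm g ε E) x v u := by
  have hω : DifferentiableAt ℝ (coframeForm g ε E) x :=
    ((contDiffOn_coframeForm hg ε hE).contDiffAt (hU.mem_nhds hx)).differentiableAt one_ne_zero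
  have hbasis (α β i : Fin n) : fderiv ℝ (coframeForm g ε E) x (Pi.single α 1) (Pi.single β 1) i
      = ∑ k, coframe g ε E x i k * christoffel g k α β x := by
    rw [← coframe_fderiv hU hg hε hE horth hpar hx α i β]
    let L : ((Fin n → ℝ) →L[ℝ] (Fin n → ℝ)) →L[ℝ] ℝ :=
      (ContinuousLinearMap.proj i).comp (ContinuousLinearMap.apply ℝ (Fin n → ℝ) (Pi.single β 1))
    have hL : (fun y => coframe g ε E y i β) = fun y => L (coframeForm g ε E y) := by
      ext y
      simp [L, coframeForm]
    rw [hL]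
    have := (L.hasFDerivAt.comp x hω.hasFDerivAt).fderiv
    change fderiv ℝ (fun y => L (coframeForm g ε E y)) x = _ at this
    rw [this]
    rfl
  let T : (Fin n → ℝ) →ₗ[ℝ] (Fin n → ℝ) →ₗ[ℝ] (Fin n → ℝ) :=
    (ContinuousLinearMap.coeLM ℝ).comp (fderiv ℝ (coframeForm g ε E) x).toLinearMap
  -- Symmetry of the bilinear map only has to be tested on the standard basis.
  have hT : T = T.flip := by
    refine LinearMap.ext_basis (Pi.basisFun ℝ (Fin n)) (Pi.basisFun ℝ (Fin n)) fun α β => ?_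
    ext i
    simp only [Pi.basisFun_apply, LinearMap.flip_apply]
    change fderiv ℝ (coframeForm g ε E) x (Pi.single α 1) (Pi.single β 1) i
      = fderiv ℝ (coframeForm g ε E) x (Pi.single β 1) (Pi.single α 1) i
    rw [hbasis, hbasis]
    exact Finset.sum_congr rfl fun k _ => by rw [christoffel_symm hU hsymm hx]
  exact congrArg (fun S => S u v) hT

/-- **`C¹` frame-flat implies `C²` coordinate-flat.**
Let `U ⊆ ℝⁿ` be open and `g` a `C¹` field of symmetric invertible matrices on
`U`. Suppose `E 1, …, E n` are `C¹` vector fields on `U` forming a parallel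
orthonormal frame for `g` with signs `ε_i ∈ {−1, 1}`, i.e.
`E_i(x)ᵀ g(x) E_j(x) = ε_i δ_{ij}` and each `E_j` is parallel:
`∂_α E_j^k + Σ_γ Γ^k_{αγ} E_j^γ = 0` on `U`. Then every `p ∈ U` has an open
neighborhood `V ⊆ U` on which there is a `C²` coordinate system `φ`
(a bijection onto an open set `W` with `C²` inverse) such that
`g(x) = Dφ(x)ᵀ · diag(ε) · Dφ(x)` on `V`, i.e. `φ` pulls back the constant
semi-Euclidean metric of signature `(ε_1, …, ε_n)` to `g`. -/
theorem frame_flat_implies_coordinate_flat {n : ℕ} {U : Set (Fin n → ℝ)}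
    (hU : IsOpen U)
    (g : (Fin n → ℝ) → Matrix (Fin n) (Fin n) ℝ)
    (hg : ∀ i j : Fin n, ContDiffOn ℝ 1 (fun y => g y i j) U)
    (hsymm : ∀ x ∈ U, (g x).IsSymm)
    (hinv : ∀ x ∈ U, IsUnit (g x).det)
    (ε : Fin n → ℝ) (hε : ∀ i, ε i = 1 ∨ ε i = -1)
    (E : Fin n → (Fin n → ℝ) → (Fin n → ℝ))
    (hE : ∀ j, ContDiffOn ℝ 1 (E j) U)
    (horth : ∀ x ∈ U, ∀ i j : Fin n,
      E i x ⬝ᵥ (g x *ᵥ E j x) = if i = j then ε i else 0)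
    (hpar : ∀ x ∈ U, ∀ α j k : Fin n,
      fderiv ℝ (fun y => E j y k) x (Pi.single α 1)
        + ∑ γ' : Fin n, christoffel g k α γ' x * E j x γ' = 0) :
    ∀ p ∈ U,
      ∃ (V W : Set (Fin n → ℝ)) (φ ψ : (Fin n → ℝ) → (Fin n → ℝ)),
        IsOpen V ∧ p ∈ V ∧ V ⊆ U ∧ IsOpen W ∧
        ContDiffOn ℝ 2 φ V ∧ ContDiffOn ℝ 2 ψ W ∧
        Set.BijOn φ V W ∧
        (∀ x ∈ V, ψ (φ x) = x) ∧ (∀ y ∈ W, φ (ψ y) = y) ∧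
        (∀ x ∈ V,
          g x = (jacobian φ x)ᵀ * Matrix.diagonal ε * jacobian φ x) := by
  intro p hp
  obtain ⟨r, hr, hrU⟩ := Metric.isOpen_iff.1 hU p hp
  set b := Metric.ball p r
  have hb : IsOpen b := Metric.isOpen_ball
  have hω := (contDiffOn_coframeForm hg ε hE).mono hrU
  obtain ⟨φ, hφ⟩ := (convex_ball p r).exists_forall_hasFDerivAt_of_fderiv_symmetric hb
    (hω.differentiableOn one_ne_zero)
    fun a ha => coframeForm_closed hU hg hsymm hε hE horth hpar (hrU ha)
  have hφ2 : ContDiffOn ℝ 2 φ b := by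
    rw [show (2 : WithTop ℕ∞) = 1 + 1 by norm_num, contDiffOn_succ_iff_fderiv_of_isOpen hb]
    refine ⟨fun a ha => (hφ a ha).differentiableAt.differentiableWithinAt, by simp, ?_⟩
    exact hω.congr fun a ha => (hφ a ha).fderiv
  have hequiv : ∀ x ∈ b, ∃ e : (Fin n → ℝ) ≃L[ℝ] (Fin n → ℝ),
      (e : (Fin n → ℝ) →L[ℝ] (Fin n → ℝ)) = coframeForm g ε E x := by
    intro x hx
    have hBA := coframe_mul_frame hε (horth x (hrU hx))
    refine ⟨(Matrix.toLin'OfInv (mul_eq_one_comm.mp hBA) hBA).toContinuousLinearEquiv, ?_⟩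
    ext v
    rfl
  obtain ⟨e, he⟩ := hequiv p (Metric.mem_ball_self hr)
  have hp2 : ContDiffAt ℝ 2 φ p := hφ2.contDiffAt (hb.mem_nhds (Metric.mem_ball_self hr))
  have hφp : HasFDerivAt φ (e : (Fin n → ℝ) →L[ℝ] (Fin n → ℝ)) p :=
    he ▸ hφ p (Metric.mem_ball_self hr)
  let F₀ := hp2.toOpenPartialHomeomorph φ hφp two_ne_zero
  -- Restricting to the ball keeps `dφ = coframeForm` available, and hence invertible, at every point
  -- of the source; the inverse is then `C²` on the whole target, not only near `φ p`.
  let F := F₀.restrOpen b hb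
  have hFb : F.source ⊆ b := Set.inter_subset_right
  refine ⟨F.source, F.target, φ, F.symm, F.open_source, ?_, hFb.trans hrU, F.open_target,
    hφ2.mono hFb, ?_, F.bijOn, fun x hx => F.left_inv hx, fun y hy => F.right_inv hy, ?_⟩
  · exact ⟨hp2.mem_toOpenPartialHomeomorph_source hφp two_ne_zero, Metric.mem_ball_self hr⟩
  · intro y hy
    have hyb := hFb (F.map_target hy)
    obtain ⟨e', he'⟩ := hequiv _ hyb
    exact (F.contDiffAt_symm hy (he' ▸ hφ _ hyb)
      (hφ2.contDiffAt (hb.mem_nhds hyb))).contDiffWithinAt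
  · intro x hx
    have hJ : jacobian φ x = coframe g ε E x := by
      ext i j
      simp [jacobian, (hφ x (hFb hx)).fderiv, coframeForm]
    rw [hJ]
    exact metric_eq_coframe hε (hsymm x (hrU (hFb hx))) (horth x (hrU (hFb hx)))
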